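/- Eventual convergence of the Contour algorithm: there exists a natural number K such that for all k ≥ K and all vertices v, L_k(v) equals the minimum vertex of the connected component of v; consequently, for all k ≥ K, two vertices receive the same label under L_k if and only if they lie in the same connected component of G. -/

import Mathlib

variable {V : Type*} [Fintype V] [LinearOrder V] [Nonempty V]

/-- One-step two-order Contour update `U`: `U(L)(w)` is the minimum of the finite
nonempty set `{L(L(w))} ∪ {L(L(v)) : v adjacent to w} ∪
{L(L(v)) : v adjacent to some u with L(u) = w}`. -/
def contourStep (G : SimpleGraph V) [DecidableRel G.Adj] (L : V → V) : V → V :=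
  fun w =>
    (insert (L (L w))
      ((G.neighborFinset w).image (fun v => L (L v)) ∪
        (Finset.univ.filter (fun v => ∃ u, G.Adj v u ∧ L u = w)).image
          (fun v => L (L v)))).min' (Finset.insert_nonempty _ _)

/-- Synchronous two-order Contour labeling sequence: `L_0 = id`, `L_{k+1} = U(L_k)`. -/
def contourSeq (G : SimpleGraph V) [DecidableRel G.Adj] : ℕ → V → V
  | 0 => id
  | (k + 1) => contourStep G (contourSeq G k)

/-- The minimum vertex of the connected component of `v`. -/
noncomputable def compMin (G : SimpleGraph V) (v : V) : V :=
  haveI : DecidablePred (G.Reachable v) := Classical.decPred _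
  (Finset.univ.filter (G.Reachable v)).min'
    ⟨v, Finset.mem_filter.mpr ⟨Finset.mem_univ v, SimpleGraph.Reachable.refl v⟩⟩

/-!
Every label stays in the component of its vertex, and labels never increase, so the labelings
descend in the finite order `V → V` and become stationary. A stationary labeling `L ≤ id` satisfies
`L u ≤ L (L v) ≤ L v` for all adjacent `u`, `v`. Hence, if `m` is the minimum of the component of
`v`, then `L v ≤ L m ≤ m`, and equality holds because `L v` lies in that component.
-/

section

omit [Nonempty V]

theorem apply_le_apply_of_reachable {W α : Type*} [Preorder α] {G : SimpleGraph W} {f : W → α}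
    (hf : ∀ u v, G.Adj u v → f u ≤ f v) {u v : W} (h : G.Reachable u v) : f u ≤ f v := by
  obtain ⟨p⟩ := h
  induction p with
  | nil => exact le_rfl
  | cons hadj _ ih => exact (hf _ _ hadj).trans ih

theorem isLeast_compMin (G : SimpleGraph V) (v : V) :
    IsLeast {w | G.Reachable v w} (compMin G v) := by
  let : DecidablePred (G.Reachable v) := Classical.decPred _
  rw [← Finset.coe_filter_univ]
  exact Finset.isLeast_min' _ _

theorem reachable_compMin (G : SimpleGraph V) (v : V) : G.Reachable v (compMin G v) :=
  (isLeast_compMin G v).1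

theorem compMin_eq_compMin_iff (G : SimpleGraph V) {u v : V} :
    compMin G u = compMin G v ↔ G.Reachable u v where
  mp h := (reachable_compMin G u).trans (h ▸ (reachable_compMin G v).symm)
  mpr h := by
    have same_component : {w | G.Reachable u w} = {w | G.Reachable v w} :=
      Set.ext fun _ => ⟨h.symm.trans, h.trans⟩
    exact (isLeast_compMin G u).unique (same_component ▸ isLeast_compMin G v)

variable (G : SimpleGraph V) [DecidableRel G.Adj] {L : V → V}

theorem contourStep_le_apply_apply (L : V → V) (w : V) : contourStep G L w ≤ L (L w) :=
  Finset.min'_le _ _ (Finset.mem_insert_self _ _)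

theorem contourStep_le_apply_apply_of_adj (L : V → V) {w v : V} (h : G.Adj w v) :
    contourStep G L w ≤ L (L v) :=
  Finset.min'_le _ _ <| Finset.mem_insert_of_mem <| Finset.mem_union_left _ <|
    Finset.mem_image_of_mem _ <| (G.mem_neighborFinset w v).2 h

theorem contourStep_le (hle : L ≤ id) : contourStep G L ≤ L :=
  fun w => (contourStep_le_apply_apply G L w).trans (hle (L w))

theorem reachable_contourStep (hreach : ∀ v, G.Reachable v (L v)) (w : V) :
    G.Reachable w (contourStep G L w) := by
  have hLL (v : V) : G.Reachable v (L (L v)) := (hreach v).trans (hreach (L v))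
  have hmem : contourStep G L w ∈ _ := Finset.min'_mem _ (Finset.insert_nonempty _ _)
  simp only [Finset.mem_insert, Finset.mem_union, Finset.mem_image, Finset.mem_filter_univ,
    SimpleGraph.mem_neighborFinset] at hmem
  obtain hself | ⟨v, hwv, hv⟩ | ⟨v, ⟨u, hvu, rfl⟩, hv⟩ := hmem
  · exact hself ▸ hLL w
  · exact hv ▸ hwv.reachable.trans (hLL v)
  · exact hv ▸ (hreach u).symm.trans (hvu.symm.reachable.trans (hLL v))

theorem apply_le_apply_of_isFixedPt_contourStep (hfix : Function.IsFixedPt (contourStep G) L)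
    (hle : L ≤ id) {u v : V} (h : G.Reachable u v) : L u ≤ L v := by
  refine apply_le_apply_of_reachable (fun a b hab => ?_) h
  calc
    L a = contourStep G L a := congrFun hfix.symm a
    _ ≤ L (L b) := contourStep_le_apply_apply_of_adj G L hab
    _ ≤ L b := hle (L b)

theorem eq_compMin_of_isFixedPt_contourStep (hfix : Function.IsFixedPt (contourStep G) L)
    (hle : L ≤ id) (hreach : ∀ v, G.Reachable v (L v)) : L = compMin G := by
  funext v
  apply le_antisymm
  · exact (apply_le_apply_of_isFixedPt_contourStep G hfix hle (reachable_compMin G v)).trans (hle _)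
  · exact (isLeast_compMin G v).2 (hreach v)

theorem contourSeq_le_id (k : ℕ) : contourSeq G k ≤ id := by
  induction k with
  | zero => exact le_rfl
  | succ k ih => exact (contourStep_le G ih).trans ih

theorem antitone_contourSeq : Antitone (contourSeq G) :=
  antitone_nat_of_succ_le fun k => contourStep_le G (contourSeq_le_id G k)

theorem reachable_contourSeq (k : ℕ) (v : V) : G.Reachable v (contourSeq G k v) := by
  induction k generalizing v with
  | zero => exact .refl v
  | succ k ih => exact reachable_contourStep G ih v

theorem exists_forall_ge_isFixedPt_contourSeq :
    ∃ K, ∀ k, K ≤ k → Function.IsFixedPt (contourStep G) (contourSeq G k) := by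
  obtain ⟨K, hK⟩ := WellFoundedLT.antitone_chain_condition (antitone_contourSeq G)
  exact ⟨K, fun k hk => (hK (k + 1) (hk.trans k.le_succ)).symm.trans (hK k hk)⟩

end

/-- Eventual convergence of the Contour algorithm: there exists `K` such that for all
`k ≥ K` and all `v`, `L_k(v)` is the minimum vertex of the component of `v`; and hence
for all `k ≥ K`, two vertices get the same label iff they are in the same component. -/
theorem contour_eventual_convergence (G : SimpleGraph V) [DecidableRel G.Adj] :
    ∃ K : ℕ,
      (∀ k : ℕ, K ≤ k → ∀ v : V, contourSeq G k v = compMin G v) ∧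
      (∀ k : ℕ, K ≤ k → ∀ u v : V,
        (contourSeq G k u = contourSeq G k v ↔ G.Reachable u v)) := by
  obtain ⟨K, hK⟩ := exists_forall_ge_isFixedPt_contourSeq G
  have hmin (k : ℕ) (hk : K ≤ k) (v : V) : contourSeq G k v = compMin G v :=
    congrFun (eq_compMin_of_isFixedPt_contourStep G (hK k hk) (contourSeq_le_id G k)
      (reachable_contourSeq G k)) v
  refine ⟨K, hmin, fun k hk u v => ?_⟩
  rw [hmin k hk, hmin k hk, compMin_eq_compMin_iff]
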